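/- arXiv:2002.11445 — 10 statements merged into one kernel-verified Lean document; each statement's English description precedes it below -/
import Mathlib

section
/- Let R be a commutative ring and let G = (g_{ij}) be a symmetric matrix over R indexed by {0,1,…,N}. For every s ≥ 1 and every sequence of indices i_1,…,i_s ∈ {1,…,N}, the product ∏_{k=1}^{s} (g_{i_k i_{k+1}} − g_{0 i_k} g_{0 i_{k+1}}) (indices taken cyclically, so i_{s+1} = i_1) lies in the subring of R generated by the cyclic products of G. -/
/-- The set of cyclic products of a square matrix `A`: all products of the form
`a_{i₁ i₂} a_{i₂ i₃} ⋯ a_{iₛ i₁}` with `s ≥ 1`. -/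
def cycProd {R : Type*} [CommRing R] {I : Type*} (A : Matrix I I R) : Set R :=
  {x | ∃ (s : ℕ) (idx : ℕ → I), 1 ≤ s ∧
    x = ∏ k ∈ Finset.range s, A (idx k) (idx ((k + 1) % s))}

/-- `x` is the product of `A` along a walk from `a` to `b` of positive length. -/
def IsWalkProd {R : Type*} [CommRing R] {I : Type*} (A : Matrix I I R) (a b : I) (x : R) : Prop :=
  ∃ (n : ℕ) (f : ℕ → I), f 0 = a ∧ f (n + 1) = b ∧
    x = ∏ k ∈ Finset.range (n + 1), A (f k) (f (k + 1))

/-- The additive span of the walk products from `a` to `b`. -/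
def walkSpan {R : Type*} [CommRing R] {I : Type*} (A : Matrix I I R) (a b : I) : AddSubgroup R :=
  AddSubgroup.closure {x | IsWalkProd A a b x}

theorem isWalkProd_one {R : Type*} [CommRing R] {I : Type*} (A : Matrix I I R) (a b : I) :
    IsWalkProd A a b (A a b) :=
  ⟨0, fun k => if k = 0 then a else b, by simp, by simp, by simp⟩

theorem IsWalkProd.snoc {R : Type*} [CommRing R] {I : Type*} {A : Matrix I I R} {a b : I} {x : R}
    (h : IsWalkProd A a b x) (c : I) : IsWalkProd A a c (x * A b c) := by
  obtain ⟨n, f, h0, h1, rfl⟩ := h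
  refine ⟨n + 1, fun k => if k ≤ n + 1 then f k else c, by simp [h0], by simp, ?_⟩
  rw [Finset.prod_range_succ _ (n + 1)]
  congr 1
  · refine Finset.prod_congr rfl fun k hk => ?_
    have hk := Finset.mem_range.1 hk
    beta_reduce
    rw [if_pos (by omega), if_pos (by omega)]
  · simp [h1]

theorem walkSpan_snoc {R : Type*} [CommRing R] {I : Type*} {A : Matrix I I R} {a b : I} {x : R}
    (h : x ∈ walkSpan A a b) (c : I) : x * A b c ∈ walkSpan A a c := by
  unfold walkSpan at h
  induction h using AddSubgroup.closure_induction with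
  | mem x hx => exact AddSubgroup.subset_closure (hx.snoc c)
  | zero => rw [zero_mul]; exact zero_mem _
  | add x y _ _ hx hy => rw [add_mul]; exact add_mem hx hy
  | neg x _ hx => rw [neg_mul]; exact neg_mem hx

theorem walkSpan_le {R : Type*} [CommRing R] {I : Type*} {A : Matrix I I R} {a : I} {x : R}
    (h : x ∈ walkSpan A a a) : x ∈ Subring.closure (cycProd A) := by
  unfold walkSpan at h
  induction h using AddSubgroup.closure_induction with
  | mem x hx =>
    obtain ⟨n, f, h0, h1, rfl⟩ := hx
    refine Subring.subset_closure ⟨n + 1, f, by omega, ?_⟩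
    refine Finset.prod_congr rfl fun k hk => ?_
    have hk := Finset.mem_range.1 hk
    rcases Nat.lt_or_ge (k + 1) (n + 1) with h | h
    · rw [Nat.mod_eq_of_lt h]
    · obtain rfl : k = n := by omega
      rw [Nat.mod_self, h0, h1]
  | zero => exact zero_mem _
  | add x y _ _ hx hy => exact add_mem hx hy
  | neg x _ hx => exact neg_mem hx

theorem prod_mem_walkSpan {R : Type*} [CommRing R] {I : Type*} {A : Matrix I I R} (o : I)
    (f : ℕ → I) (n : ℕ) :
    ∏ k ∈ Finset.range (n + 1), (A (f k) (f (k + 1)) - A (f k) o * A o (f (k + 1)))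
      ∈ walkSpan A (f 0) (f (n + 1)) := by
  induction n with
  | zero =>
    have h (b : I) : A (f 0) b ∈ walkSpan A (f 0) b :=
      AddSubgroup.subset_closure (isWalkProd_one A _ _)
    simpa using sub_mem (h (f 1)) (walkSpan_snoc (h o) (f 1))
  | succ n ih =>
    rw [Finset.prod_range_succ, mul_sub, ← mul_assoc]
    exact sub_mem (walkSpan_snoc ih _) (walkSpan_snoc (walkSpan_snoc ih _) _)

/-- The expansion claim in the proof of Lemma 3.3: the cyclic product of the
differences `g_{i_k i_{k+1}} − g_{0 i_k} g_{0 i_{k+1}}` lies in the subring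
generated by the cyclic products of `G`. -/
theorem cyclic_difference_product_mem_subring_closure
    (R : Type*) [CommRing R] (N : ℕ)
    (G : Matrix (Fin (N + 1)) (Fin (N + 1)) R) (hGsym : G.IsSymm)
    (s : ℕ) (hs : 1 ≤ s) (idx : ℕ → Fin N) :
    (∏ k ∈ Finset.range s,
        (G (idx k).succ (idx ((k + 1) % s)).succ -
          G 0 (idx k).succ * G 0 (idx ((k + 1) % s)).succ))
      ∈ Subring.closure (cycProd G) := by
  obtain ⟨n, rfl⟩ : ∃ n, s = n + 1 := ⟨s - 1, by omega⟩
  have h := prod_mem_walkSpan (A := G) 0 (fun k => (idx (k % (n + 1))).succ) n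
  simp only [Nat.mod_self, Nat.zero_mod] at h
  have h2 := walkSpan_le h
  convert h2 using 1
  refine Finset.prod_congr rfl fun k hk => ?_
  rw [Nat.mod_eq_of_lt (Finset.mem_range.1 hk), hGsym.apply 0]
end

section
/- Let K be a field and let G = (g_{ij}) be a symmetric (N+1)×(N+1) matrix over K indexed by {0,1,…,N} with g_{00} = 1. Suppose c_1,…,c_N ∈ K are nonzero with c_i^2 = 1 − g_{0i}^2 for each i, and let G' = (g'_{ij})_{i,j=1}^N be the projected matrix with g'_{ij} = (g_{ij} − g_{0i} g_{0j})/(c_i c_j). Then every cyclic product of G' lies in the subfield of K generated by the cyclic products of G. -/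
inductive IsWalkProd_s4 {K : Type*} [Field K] {I : Type*} (A : Matrix I I K) : I → I → K → Prop
  | nil (i : I) : IsWalkProd_s4 A i i 1
  | cons (i j k : I) (y : K) : IsWalkProd_s4 A j k y → IsWalkProd_s4 A i k (A i j * y)

lemma IsWalkProd_s4.exists_idx {K : Type*} [Field K] {I : Type*} {A : Matrix I I K} {i j : I} {y : K}
    (h : IsWalkProd_s4 A i j y) : ∃ (s : ℕ) (idx : ℕ → I), idx 0 = i ∧ idx s = j ∧
      y = ∏ k ∈ Finset.range s, A (idx k) (idx (k + 1)) := by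
  induction h with
  | nil i => exact ⟨0, fun _ => i, rfl, rfl, by simp⟩
  | cons i j k y _ ih =>
    obtain ⟨s, idx, h0, hs, hy⟩ := ih
    refine ⟨s + 1, fun n => Nat.casesOn n i idx, rfl, hs, ?_⟩
    rw [Finset.prod_range_succ', hy, mul_comm, ← h0]
    rfl

lemma IsWalkProd_s4.mem_closure {K : Type*} [Field K] {I : Type*} {A : Matrix I I K} {i : I} {y : K}
    (h : IsWalkProd_s4 A i i y) : y ∈ Subfield.closure (cycProd A) := by
  obtain ⟨s, idx, h0, hs, hy⟩ := h.exists_idx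
  rcases Nat.eq_zero_or_pos s with rfl | hpos
  · rw [hy]; simpa using one_mem (Subfield.closure (cycProd A))
  · refine Subfield.subset_closure ⟨s, idx, hpos, ?_⟩
    rw [hy]
    refine Finset.prod_congr rfl fun k hk => ?_
    have hk' : k < s := Finset.mem_range.mp hk
    rcases Nat.lt_or_ge (k + 1) s with h1 | h1
    · rw [Nat.mod_eq_of_lt h1]
    · have : k + 1 = s := by omega
      rw [this, Nat.mod_self, h0, hs]

/-- Lemma 3.3 (field inclusion): every cyclic product of the projected matrix `G'`
lies in the subfield generated by the cyclic products of `G`. -/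
theorem cycProd_projected_mem_subfield_closure
    (K : Type*) [Field K] (N : ℕ)
    (G : Matrix (Fin (N + 1)) (Fin (N + 1)) K) (hGsym : G.IsSymm)
    (hG00 : G 0 0 = 1)
    (c : Fin N → K) (hc : ∀ i, c i ≠ 0)
    (hc2 : ∀ i : Fin N, (c i) ^ 2 = 1 - (G 0 i.succ) ^ 2)
    (G' : Matrix (Fin N) (Fin N) K)
    (hG' : ∀ i j : Fin N,
      G' i j = (G i.succ j.succ - G 0 i.succ * G 0 j.succ) / (c i * c j)) :
    ∀ x ∈ cycProd G', x ∈ Subfield.closure (cycProd G) := by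
  rintro x ⟨s, idx, hs, rfl⟩
  obtain ⟨u, hu⟩ : ∃ u : ℕ → Fin N, u = fun k => idx (k % s) := ⟨_, rfl⟩
  have hus : u s = u 0 := by simp [hu]
  have h1 : ∏ k ∈ Finset.range s, G' (idx k) (idx ((k + 1) % s))
      = ∏ k ∈ Finset.range s, G' (u k) (u (k + 1)) := by
    refine Finset.prod_congr rfl fun k hk => ?_
    simp [hu, Nat.mod_eq_of_lt (Finset.mem_range.mp hk)]
  have h2 : ∏ k ∈ Finset.range s, c (u (k + 1)) = ∏ k ∈ Finset.range s, c (u k) := by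
    have e1 := Finset.prod_range_succ (fun k => c (u k)) s
    have e2 := Finset.prod_range_succ' (fun k => c (u k)) s
    rw [e1] at e2
    simp only [hus] at e2
    exact (mul_right_cancel₀ (hc (u 0)) e2).symm
  have hsym : ∀ i j, G i j = G j i := fun i j => hGsym.apply j i
  have hnum : ∀ n : ℕ, ∀ y, IsWalkProd_s4 G (u n).succ (u 0).succ y →
      (∏ k ∈ Finset.range n, (G (u k).succ (u (k + 1)).succ
        - G 0 (u k).succ * G 0 (u (k + 1)).succ)) * y ∈ Subfield.closure (cycProd G) := by
    intro n
    induction n with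
    | zero => intro y hy; simpa using hy.mem_closure
    | succ n ih =>
      intro y hy
      have a := ih _ (IsWalkProd_s4.cons (u n).succ _ _ _ hy)
      have b := ih _ (IsWalkProd_s4.cons (u n).succ _ _ _ (IsWalkProd_s4.cons 0 _ _ _ hy))
      have d := sub_mem a b
      rw [hsym (u n).succ 0] at d
      rw [Finset.prod_range_succ]
      convert d using 1
      ring
  have hn := hnum s 1 (by rw [hus]; exact IsWalkProd_s4.nil _)
  rw [mul_one] at hn
  rw [h1]
  simp only [hG']
  rw [Finset.prod_div_distrib, Finset.prod_mul_distrib, h2, ← Finset.prod_mul_distrib]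
  refine div_mem hn (prod_mem fun k _ => ?_)
  rw [← pow_two, hc2]
  refine sub_mem (one_mem _) ?_
  have w := (IsWalkProd_s4.cons 0 _ _ _ (IsWalkProd_s4.cons (u k).succ 0 _ _
    (IsWalkProd_s4.nil (A := G) 0))).mem_closure
  rw [hsym (u k).succ 0, mul_one, ← pow_two] at w
  exact w
end

section
/- For every integer m ≥ 2, the real number (1/2)·(sin(π/(2m)))^{-2} is an algebraic integer, i.e. integral over ℤ. -/
lemma isIntegral_inv_aux (p : Polynomial ℤ) (t : ℝ) (ht : t ≠ 0) (h0 : p.eval 0 = 1)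
    (hp : Polynomial.aeval t p = 0) : IsIntegral ℤ t⁻¹ := by
  have hc : p.coeff 0 = 1 := by rw [Polynomial.coeff_zero_eq_eval_zero, h0]
  refine ⟨p.reverse, ?_, ?_⟩
  · rw [Polynomial.Monic, Polynomial.reverse_leadingCoeff, Polynomial.trailingCoeff,
      Polynomial.natTrailingDegree_eq_zero.2 (Or.inr (by rw [hc]; exact one_ne_zero)), hc]
  · letI : Invertible t := invertibleOfNonzero ht
    have := (Polynomial.eval₂_reverse_eq_zero_iff (algebraMap ℤ ℝ) t p).2 hp
    rwa [invOf_eq_inv] at this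

open Polynomial in
/-- Lemma 4.1: `ρₘ/2 = (1/2)·sin⁻²(π/(2m))` is an algebraic integer for `m ≥ 2`. -/
theorem half_inv_sin_sq_isIntegral (m : ℕ) (hm : 2 ≤ m) :
    IsIntegral ℤ ((1 / 2 : ℝ) * ((Real.sin (Real.pi / (2 * m))) ^ 2)⁻¹) := by
  have hm' : (2 : ℝ) ≤ m := by exact_mod_cast hm
  have hpi := Real.pi_pos
  obtain ⟨θ, hθ⟩ : ∃ θ : ℝ, θ = Real.pi / m := ⟨_, rfl⟩
  have hmθ : m * θ = Real.pi := by rw [hθ]; field_simp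
  have hθ0 : 0 < θ := by rw [hθ]; positivity
  have hθ1 : θ < Real.pi := by nlinarith
  have hs : 0 < Real.sin θ := Real.sin_pos_of_pos_of_lt_pi hθ0 hθ1
  have ht : 1 - Real.cos θ ≠ 0 := by
    intro h
    nlinarith [Real.sin_sq_add_cos_sq θ]
  have key : (1 / 2 : ℝ) * ((Real.sin (Real.pi / (2 * m))) ^ 2)⁻¹ = (1 - Real.cos θ)⁻¹ := by
    have h2 : θ = 2 * (Real.pi / (2 * m)) := by rw [hθ]; field_simp
    rw [h2, Real.cos_two_mul, Real.cos_sq']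
    rw [one_div, ← mul_inv]
    congr 1
    ring
  rw [key]
  obtain ⟨k, hk | hk⟩ := Nat.even_or_odd' m
  · refine isIntegral_inv_aux ((Chebyshev.T ℤ k).comp (1 - X)) _ ht (by simp) ?_
    have h2 : (k : ℝ) * θ = Real.pi / 2 := by
      rw [hk] at hmθ; push_cast at hmθ; linarith
    rw [aeval_comp]
    have h1 : aeval (1 - Real.cos θ) (1 - X : ℤ[X]) = Real.cos θ := by simp
    rw [h1, Chebyshev.aeval_T, Chebyshev.T_real_cos]
    push_cast
    rw [h2, Real.cos_pi_div_two]
  · refine isIntegral_inv_aux ((Chebyshev.U ℤ k - Chebyshev.U ℤ (k - 1)).comp (1 - X)) _ ht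
      (by simp) ?_
    have h2 : ((k : ℝ) + 1) * θ = Real.pi - k * θ := by
      rw [hk] at hmθ; push_cast at hmθ; linarith
    rw [aeval_comp]
    have h1 : aeval (1 - Real.cos θ) (1 - X : ℤ[X]) = Real.cos θ := by simp
    rw [h1, map_sub, Chebyshev.aeval_U, Chebyshev.aeval_U]
    apply mul_right_cancel₀ hs.ne'
    rw [sub_mul, Chebyshev.U_real_cos, Chebyshev.U_real_cos]
    push_cast
    rw [h2, Real.sin_pi_sub]
    simp
end

section
/- For every integer m ≥ 2, the real number 1/(√2 · sin(π/(2m))) is an algebraic integer, i.e. integral over ℤ. -/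
open Polynomial in
theorem aux_isIntegral_inv (P : ℤ[X]) (c : ℝ) (hP : P.eval 1 = 1) (hc : aeval c P = 0) :
    IsIntegral ℤ ((1 - c)⁻¹) := by
  have h0 : (P.comp (1 - X)).coeff 0 = 1 := by
    rw [coeff_zero_eq_eval_zero]; simp [eval_comp, hP]
  have h1 : aeval (1 - c) (P.comp (1 - X)) = 0 := by
    rw [aeval_comp]; simp [hc]
  generalize P.comp (1 - X) = q at h0 h1
  have h2 : (1 - c) ≠ 0 := by
    intro h
    rw [h, ← coeff_zero_eq_aeval_zero', h0] at h1
    simp at h1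
  refine ⟨q.reverse, ?_, ?_⟩
  · have : q.trailingCoeff = 1 := by
      rw [trailingCoeff, natTrailingDegree_eq_zero.2 (Or.inr (by rw [h0]; simp)), h0]
    rw [Monic, reverse_leadingCoeff, this]
  · letI := invertibleOfNonzero h2
    rw [← invOf_eq_inv, eval₂_reverse_eq_zero_iff]
    exact h1

/-- Main step of Lemma 4.1: `τₘ⁻¹ = (√2 · sin(π/(2m)))⁻¹` is an algebraic integer
for `m ≥ 2`. -/
theorem inv_sqrt_two_sin_isIntegral (m : ℕ) (hm : 2 ≤ m) :
    IsIntegral ℤ ((Real.sqrt 2 * Real.sin (Real.pi / (2 * m)))⁻¹) := by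
  have hm0 : (m : ℝ) ≠ 0 := by positivity
  refine IsIntegral.of_pow (n := 2) (by norm_num) ?_
  have hs : ((Real.sqrt 2 * Real.sin (Real.pi / (2 * m)))⁻¹) ^ 2
      = (1 - Real.cos (Real.pi / m))⁻¹ := by
    rw [inv_pow, mul_pow, Real.sq_sqrt (by norm_num)]
    have : Real.pi / m = 2 * (Real.pi / (2 * m)) := by field_simp
    rw [this, Real.cos_two_mul, Real.cos_sq']
    ring
  rw [hs]
  obtain ⟨n, hn | hn⟩ := Nat.even_or_odd' m
  · refine aux_isIntegral_inv (Polynomial.Chebyshev.T ℤ n) _ (by simp) ?_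
    rw [Polynomial.Chebyshev.aeval_T, Polynomial.Chebyshev.T_real_cos, ← Real.cos_pi_div_two]
    congr 1
    have : (m : ℝ) = 2 * n := by exact_mod_cast hn
    have hn0 : (n : ℝ) ≠ 0 := by rintro h; simp [this, h] at hm0
    rw [this]; push_cast; field_simp
  · refine aux_isIntegral_inv
      (Polynomial.Chebyshev.U ℤ n - Polynomial.Chebyshev.U ℤ (n - 1)) _ (by simp) ?_
    rw [map_sub, Polynomial.Chebyshev.aeval_U, Polynomial.Chebyshev.aeval_U]
    have hsin : Real.sin (Real.pi / m) ≠ 0 := by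
      refine (Real.sin_pos_of_pos_of_lt_pi (by positivity) ?_).ne'
      exact div_lt_self Real.pi_pos (by exact_mod_cast hm)
    refine (mul_eq_zero.1 ?_).resolve_right hsin
    rw [sub_mul, Polynomial.Chebyshev.U_real_cos, Polynomial.Chebyshev.U_real_cos, sub_eq_zero,
      ← Real.sin_pi_sub]
    congr 1
    have : (m : ℝ) = 2 * n + 1 := by exact_mod_cast hn
    have h3 : (2 * n + 1 : ℝ) ≠ 0 := this ▸ hm0
    rw [this]; push_cast; field_simp; ring
end

section
/- For every even integer m ≥ 2, there exists a polynomial q ∈ ℤ[X] with constant coefficient q(0) = 1 such that the image of q in ℝ[X] equals T_m(X/√2) · T_m(−X/√2), where T_m denotes the m-th Chebyshev polynomial of the first kind. -/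
open Polynomial

/-- Even case of the construction of `pₘ` in Lemma 4.1: for even `m ≥ 2`,
`Tₘ(X/√2) · Tₘ(−X/√2)` is an integer polynomial with constant term `1`. -/
theorem chebyshevT_product_int_poly (m : ℕ) (hm : 2 ≤ m) (hme : Even m) :
    ∃ q : Polynomial ℤ, q.coeff 0 = 1 ∧
      q.map (Int.castRingHom ℝ) =
        (Polynomial.Chebyshev.T ℝ m).comp (Polynomial.C (Real.sqrt 2)⁻¹ * Polynomial.X) *
        (Polynomial.Chebyshev.T ℝ m).comp (-(Polynomial.C (Real.sqrt 2)⁻¹ * Polynomial.X)) := by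
  obtain ⟨k, rfl⟩ := hme
  have hT : Polynomial.Chebyshev.T ℝ ((k + k : ℕ) : ℤ) =
      (Polynomial.Chebyshev.T ℝ k).comp (2 * X ^ 2 - 1) := by
    rw [← Polynomial.Chebyshev.T_two, ← Polynomial.Chebyshev.T_mul]
    congr 1
    push_cast
    ring
  have hs : (2 : ℝ[X]) * (Polynomial.C (Real.sqrt 2)⁻¹ * X) ^ 2 = X ^ 2 := by
    have h2 : (2 : ℝ[X]) = Polynomial.C 2 := rfl
    rw [mul_pow, ← Polynomial.C_pow, ← mul_assoc, h2, ← Polynomial.C_mul, inv_pow,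
      Real.sq_sqrt (by norm_num)]
    norm_num
  refine ⟨((Polynomial.Chebyshev.T ℤ k).comp (X ^ 2 - 1)) ^ 2, ?_, ?_⟩
  · rw [Polynomial.coeff_zero_eq_eval_zero]
    simp only [eval_pow, eval_comp, eval_sub, eval_X, eval_one]
    have e : (0 : ℤ) ^ 2 - 1 = -1 := by norm_num
    rw [e, Polynomial.Chebyshev.T_eval_neg_one]
    rcases Int.even_or_odd (k : ℤ) with h | h
    · simp [Int.negOnePow_even _ h]
    · simp [Int.negOnePow_odd _ h]
  · rw [hT, Polynomial.comp_assoc, Polynomial.comp_assoc]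
    have h1 : ((2 : ℝ[X]) * X ^ 2 - 1).comp (Polynomial.C (Real.sqrt 2)⁻¹ * X) = X ^ 2 - 1 := by
      simp [hs]
    have h2 : ((2 : ℝ[X]) * X ^ 2 - 1).comp (-(Polynomial.C (Real.sqrt 2)⁻¹ * X)) = X ^ 2 - 1 := by
      simp [hs]
    rw [h1, h2, Polynomial.map_pow, Polynomial.map_comp, Polynomial.Chebyshev.map_T, sq]
    simp
end

section
/- For every odd integer m ≥ 1, there exists a polynomial q ∈ ℤ[X] with constant coefficient q(0) = 1 such that the image of q in ℝ[X] equals U_m(X/√2) · U_m(−X/√2) + 1, where U_m denotes the m-th Chebyshev polynomial of the second kind. -/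
open Polynomial

lemma chebU_aux (k : ℕ) : ∃ e r : Polynomial ℤ, ∀ p : Polynomial ℝ, (2 * p) ^ 2 = 2 * X ^ 2 →
    (Polynomial.Chebyshev.U ℝ (2 * (k : ℤ))).comp p = e.map (Int.castRingHom ℝ) ∧
    (Polynomial.Chebyshev.U ℝ (2 * (k : ℤ) + 1)).comp p =
      2 * p * r.map (Int.castRingHom ℝ) := by
  induction k with
  | zero => exact ⟨1, 1, fun p _ => by simp⟩
  | succ k ih =>
    obtain ⟨e, r, h⟩ := ih
    refine ⟨2 * X ^ 2 * r - e, 2 * X ^ 2 * r - e - r, fun p hp => ?_⟩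
    obtain ⟨h1, h2⟩ := h p hp
    have e1 : (Polynomial.Chebyshev.U ℝ (2 * (k : ℤ) + 2)).comp p =
        (2 * X ^ 2 * r - e).map (Int.castRingHom ℝ) := by
      rw [Polynomial.Chebyshev.U_add_two]
      simp [h1, h2]
      linear_combination (r.map (Int.castRingHom ℝ)) * hp
    have a1 : 2 * ((k + 1 : ℕ) : ℤ) = 2 * (k : ℤ) + 2 := by push_cast; ring
    have a2 : 2 * (k : ℤ) + 2 + 1 = (2 * (k : ℤ) + 1) + 2 := by ring
    rw [a1]
    refine ⟨e1, ?_⟩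
    rw [a2, Polynomial.Chebyshev.U_add_two]
    have a3 : 2 * (k : ℤ) + 1 + 1 = 2 * (k : ℤ) + 2 := by ring
    rw [a3, sub_comp, mul_comp, e1, h2]
    simp
    ring

/-- Odd case of the construction of `pₘ` in Lemma 4.1: for odd `m ≥ 1`,
`Uₘ(X/√2) · Uₘ(−X/√2) + 1` is an integer polynomial with constant term `1`. -/
theorem chebyshevU_product_int_poly (m : ℕ) (hm : 1 ≤ m) (hmo : Odd m) :
    ∃ q : Polynomial ℤ, q.coeff 0 = 1 ∧
      q.map (Int.castRingHom ℝ) =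
        (Polynomial.Chebyshev.U ℝ m).comp (Polynomial.C (Real.sqrt 2)⁻¹ * Polynomial.X) *
        (Polynomial.Chebyshev.U ℝ m).comp (-(Polynomial.C (Real.sqrt 2)⁻¹ * Polynomial.X)) + 1 := by
  obtain ⟨k, rfl⟩ := hmo
  obtain ⟨e, r, h⟩ := chebU_aux k
  have hc : (C (Real.sqrt 2)⁻¹ : Polynomial ℝ) ^ 2 * 2 = 1 := by
    have h2 : (2 : Polynomial ℝ) = C 2 := rfl
    rw [h2, ← C_pow, ← C_mul, inv_pow, Real.sq_sqrt (by norm_num)]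
    norm_num
  have hp : (2 * (C (Real.sqrt 2)⁻¹ * X : Polynomial ℝ)) ^ 2 = 2 * X ^ 2 := by
    linear_combination 2 * X ^ 2 * hc
  refine ⟨1 - 2 * X ^ 2 * r ^ 2, ?_, ?_⟩
  · simp [coeff_zero_eq_eval_zero]
  · have h1 := (h _ hp).2
    have h2 := (h (-(C (Real.sqrt 2)⁻¹ * X)) (by rw [← hp]; ring)).2
    push_cast
    rw [h1, h2]
    simp
    linear_combination (r.map (Int.castRingHom ℝ)) ^ 2 * hp
end

section
/- For every odd integer m ≥ 3, U_m(sin(π/(2m))) · U_m(−sin(π/(2m))) = −1, where U_m denotes the m-th Chebyshev polynomial of the second kind. -/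
/-- Odd case in the proof of Lemma 4.1: `Uₘ(sin(π/(2m))) · Uₘ(−sin(π/(2m))) = −1`
for odd `m ≥ 3`. -/
theorem chebyshevU_eval_sin_product (m : ℕ) (hm : 3 ≤ m) (hmo : Odd m) :
    (Polynomial.Chebyshev.U ℝ m).eval (Real.sin (Real.pi / (2 * m))) *
      (Polynomial.Chebyshev.U ℝ m).eval (-Real.sin (Real.pi / (2 * m))) = -1 := by
  have hm' : (3 : ℝ) ≤ m := by exact_mod_cast hm
  rw [Polynomial.Chebyshev.U_eval_neg]
  have hodd : ((m : ℤ).negOnePow) = -1 := Int.negOnePow_odd _ (by exact_mod_cast hmo)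
  rw [hodd]
  obtain ⟨k, hk⟩ := hmo
  have hk' : (m : ℝ) = 2 * k + 1 := by exact_mod_cast hk
  have hma : (m : ℝ) * (Real.pi / (2 * m)) = Real.pi / 2 := by field_simp
  have hapos : 0 < Real.pi / (2 * m) := by positivity
  have halt : Real.pi / (2 * m) < Real.pi / 2 := by
    nlinarith
  generalize Real.pi / (2 * m) = a at *
  have hc : 0 < Real.cos a := Real.cos_pos_of_mem_Ioo ⟨by linarith, halt⟩
  have h := Polynomial.Chebyshev.U_real_cos (Real.pi / 2 - a) m
  rw [Real.cos_pi_div_two_sub, Real.sin_pi_div_two_sub] at h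
  have e : (((m : ℤ) : ℝ) + 1) * (Real.pi / 2 - a)
      = ((k + 1 : ℕ) : ℝ) * Real.pi - (a + Real.pi / 2) := by
    push_cast
    linear_combination (Real.pi / 2) * hk' - hma
  rw [e, Real.sin_nat_mul_pi_sub, Real.sin_add_pi_div_two] at h
  have h1 : ((-1 : ℝ) ^ (k + 1)) ^ 2 = 1 := by
    rw [← pow_mul, mul_comm, pow_mul]; simp
  have hu : (Polynomial.Chebyshev.U ℝ m).eval (Real.sin a) = -(-1 : ℝ) ^ (k + 1) := by
    apply mul_right_cancel₀ hc.ne'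
    rw [h]; ring
  rw [hu]
  push_cast
  linear_combination -h1
end

section
/- Let N ≥ 1 and let G = (g_{ij}) be a symmetric (N+1)×(N+1) real matrix indexed by {0,1,…,N} with g_{ii} = 1 for all i, such that for each i ∈ {1,…,N} there is an integer m_i ≥ 1 with g_{0i} = −cos(π/(2 m_i)). Assume that every cyclic product of the matrix 2G is an algebraic integer. Let G' = (g'_{ij})_{i,j=1}^N be defined by g'_{ij} = (g_{ij} − g_{0i} g_{0j})/√((1 − g_{0i}^2)(1 − g_{0j}^2)). Then every cyclic product of the matrix 2G' is an algebraic integer. -/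
lemma isIntegral_congr {x y : ℝ} (h : IsIntegral ℤ y) (e : x = y) : IsIntegral ℤ x := e ▸ h

/-- Weights of walks. -/
inductive WalkW {I : Type*} (A : Matrix I I ℝ) : I → I → ℝ → Prop
  | nil (i : I) : WalkW A i i 1
  | cons (i j k : I) (w : ℝ) : WalkW A j k w → WalkW A i k (A i j * w)

lemma WalkW.exists_fun {I : Type*} {A : Matrix I I ℝ} {i j : I} {w : ℝ} (h : WalkW A i j w) :
    ∃ (n : ℕ) (f : ℕ → I), f 0 = i ∧ f n = j ∧
      w = ∏ k ∈ Finset.range n, A (f k) (f (k + 1)) := by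
  induction h with
  | nil i => exact ⟨0, fun _ => i, rfl, rfl, by simp⟩
  | cons i j k w _ ih =>
    obtain ⟨n, f, h0, hn, hw⟩ := ih
    refine ⟨n + 1, fun t => Nat.casesOn t i f, rfl, hn, ?_⟩
    rw [Finset.prod_range_succ', mul_comm, hw]
    simp [h0]

lemma WalkW.closed_isIntegral {I : Type*} {A : Matrix I I ℝ}
    (hint : ∀ x ∈ cycProd A, IsIntegral ℤ x) {i : I} {w : ℝ} (h : WalkW A i i w) :
    IsIntegral ℤ w := by
  obtain ⟨n, f, h0, hn, hw⟩ := h.exists_fun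
  rcases Nat.eq_zero_or_pos n with rfl | hpos
  · rw [hw]; simpa using isIntegral_one
  · refine hint w ⟨n, f, hpos, ?_⟩
    rw [hw]
    refine Finset.prod_congr rfl fun k hk => ?_
    have hk' := Finset.mem_range.1 hk
    rcases Nat.lt_or_ge (k + 1) n with h1 | h1
    · rw [Nat.mod_eq_of_lt h1]
    · have : k + 1 = n := by omega
      rw [this, Nat.mod_self, hn, h0]

/-- The abstract descent step. -/
lemma descent {I J : Type*} {A : Matrix I I ℝ} (hint : ∀ x ∈ cycProd A, IsIntegral ℤ x)
    (e : J → I) (o : I) (B : Matrix J J ℝ)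
    (hB : ∀ i j, ∃ a b : ℝ, IsIntegral ℤ a ∧ IsIntegral ℤ b ∧
      B i j = a * A (e i) (e j) + b * (A (e i) o * A o (e j))) :
    ∀ x ∈ cycProd B, IsIntegral ℤ x := by
  rintro x ⟨s, idx, hs, rfl⟩
  have key : ∀ f : ℕ → J, ∀ n, ∀ w, WalkW A (e (f n)) (e (f 0)) w →
      IsIntegral ℤ ((∏ k ∈ Finset.range n, B (f k) (f (k + 1))) * w) := by
    intro f n
    induction n with
    | zero => intro w hw; simpa using hw.closed_isIntegral hint
    | succ n ih =>
      intro w hw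
      obtain ⟨a, b, ha, hb, h⟩ := hB (f n) (f (n + 1))
      have h1 := ih _ (WalkW.cons (e (f n)) _ _ _ hw)
      have h2 := ih _ (WalkW.cons (e (f n)) o _ _ (WalkW.cons o _ _ _ hw))
      rw [Finset.prod_range_succ, h]
      refine isIntegral_congr ((ha.mul h1).add (hb.mul h2)) ?_
      ring
  have h := key (fun k => idx (k % s)) s 1 (by simpa using WalkW.nil (e (idx 0)))
  rw [mul_one] at h
  refine isIntegral_congr (h) ?_
  refine Finset.prod_congr rfl fun k hk => ?_
  rw [Nat.mod_eq_of_lt (Finset.mem_range.1 hk)]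

lemma isIntegral_sin_div {φ : ℝ} (hφ : IsIntegral ℤ (2 * Real.cos φ)) (n : ℕ) :
    IsIntegral ℤ (Real.sin (n * φ) / Real.sin φ) := by
  suffices h : IsIntegral ℤ (Real.sin (n * φ) / Real.sin φ) ∧
      IsIntegral ℤ (Real.sin ((n + 1 : ℕ) * φ) / Real.sin φ) from h.1
  induction n with
  | zero =>
    refine ⟨by simpa using isIntegral_zero, ?_⟩
    by_cases h : Real.sin φ = 0
    · simpa [h] using isIntegral_zero
    · simpa [h] using isIntegral_one
  | succ n ih =>
    refine ⟨ih.2, ?_⟩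
    refine isIntegral_congr ((hφ.mul ih.2).sub ih.1) ?_
    have e1 : ((n + 1 + 1 : ℕ) : ℝ) * φ = ((n + 1 : ℕ) : ℝ) * φ + φ := by push_cast; ring
    have e2 : (n : ℝ) * φ = ((n + 1 : ℕ) : ℝ) * φ - φ := by push_cast; ring
    rw [e1, e2, Real.sin_add, Real.sin_sub]
    ring

lemma isIntegral_two_cos (k m : ℕ) : IsIntegral ℤ (2 * Real.cos (k * (Real.pi / (2 * m)))) := by
  have := Real.isIntegral_two_mul_cos_rat_mul_pi ((k : ℚ) / (2 * m))
  convert this using 3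
  push_cast
  ring

lemma sin_pos_aux {m : ℕ} (hm : 1 ≤ m) : 0 < Real.sin (Real.pi / (2 * m)) := by
  have h1 : (1 : ℝ) ≤ m := by exact_mod_cast hm
  apply Real.sin_pos_of_pos_of_lt_pi
  · have := Real.pi_pos
    positivity
  · rw [div_lt_iff₀ (by positivity)]
    nlinarith [Real.pi_pos]

lemma isIntegral_inv_sin {m : ℕ} (hm : 1 ≤ m) :
    IsIntegral ℤ (1 / Real.sin (Real.pi / (2 * m))) := by
  have h := isIntegral_sin_div (φ := Real.pi / (2 * m))
    (by simpa using isIntegral_two_cos 1 m) m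
  have h1 : (m : ℝ) ≠ 0 := by positivity
  have : (m : ℝ) * (Real.pi / (2 * m)) = Real.pi / 2 := by field_simp
  rwa [this, Real.sin_pi_div_two] at h

lemma isIntegral_inv_two_sin_sq {m : ℕ} (hm : 2 ≤ m) :
    IsIntegral ℤ (1 / (2 * Real.sin (Real.pi / (2 * m)) ^ 2)) := by
  have hpos := sin_pos_aux (show 1 ≤ m by omega)
  rcases Nat.even_or_odd' m with ⟨k, hk | hk⟩
  · have h := isIntegral_sin_div (φ := Real.pi / (2 * m))
      (by simpa using isIntegral_two_cos 1 m) k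
    have hk0 : (k : ℝ) ≠ 0 := by
      have : k ≠ 0 := by omega
      exact_mod_cast this
    have e : (k : ℝ) * (Real.pi / (2 * m)) = Real.pi / 4 := by
      rw [hk]; push_cast; field_simp; try norm_num
    rw [e, Real.sin_pi_div_four] at h
    refine isIntegral_congr (h.pow 2) ?_
    rw [div_pow, div_pow, Real.sq_sqrt (by norm_num)]
    field_simp
    try norm_num
  · have h := isIntegral_sin_div (φ := 2 * (Real.pi / (2 * m)))
      (by simpa using isIntegral_two_cos 2 m) k
    have hm0 : (m : ℝ) ≠ 0 := by positivity
    set φ := Real.pi / (2 * m) with hφ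
    have e : (k : ℝ) * (2 * φ) = Real.pi / 2 - φ := by
      have : (m : ℝ) = 2 * k + 1 := by exact_mod_cast hk
      have h2 : (m : ℝ) * φ = Real.pi / 2 := by rw [hφ]; field_simp
      rw [this] at h2
      linarith
    have hcos : 0 < Real.cos φ := by
      apply Real.cos_pos_of_mem_Ioo
      have h1 : (2 : ℝ) ≤ m := by exact_mod_cast hm
      have hp := Real.pi_pos
      have : 0 < φ := by rw [hφ]; positivity
      refine ⟨by linarith, ?_⟩
      rw [hφ, div_lt_iff₀ (by positivity)]
      nlinarith
    rw [e, Real.sin_pi_div_two_sub, Real.sin_two_mul] at h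
    have h2 : IsIntegral ℤ (2 : ℝ) := by
      exact isIntegral_congr ((isIntegral_one (R := ℤ) (B := ℝ)).add isIntegral_one) (by norm_num)
    refine isIntegral_congr (h2.mul (h.pow 2)) ?_
    field_simp

lemma isIntegral_of_sq {x : ℝ} (h : IsIntegral ℤ (x ^ 2)) : IsIntegral ℤ x :=
  IsIntegral.of_pow (by norm_num : 0 < 2) h

/-- Core computation of Theorem 2: Vinberg's integrality condition (V3) descends
to the projected Gram matrix of a facet meeting all its adjacent facets at
dihedral angles of the form `π/(2mᵢ)`. -/
theorem cycProd_two_smul_projected_isIntegral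
    (N : ℕ) (hN : 1 ≤ N)
    (G : Matrix (Fin (N + 1)) (Fin (N + 1)) ℝ) (hGsym : G.IsSymm)
    (hdiag : ∀ i, G i i = 1)
    (m : Fin N → ℕ) (hm : ∀ i, 1 ≤ m i)
    (hg0 : ∀ i : Fin N, G 0 i.succ = -Real.cos (Real.pi / (2 * m i)))
    (hint : ∀ x ∈ cycProd ((2 : ℝ) • G), IsIntegral ℤ x)
    (G' : Matrix (Fin N) (Fin N) ℝ)
    (hG' : ∀ i j : Fin N,
      G' i j = (G i.succ j.succ - G 0 i.succ * G 0 j.succ) /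
        Real.sqrt ((1 - (G 0 i.succ) ^ 2) * (1 - (G 0 j.succ) ^ 2))) :
    ∀ x ∈ cycProd ((2 : ℝ) • G'), IsIntegral ℤ x := by
  refine descent hint Fin.succ 0 _ fun i j => ?_
  have hi := sin_pos_aux (hm i)
  have hj := sin_pos_aux (hm j)
  have hsymm : G i.succ 0 = G 0 i.succ := hGsym.apply 0 i.succ
  have hsq : ∀ i, 1 - (G 0 (Fin.succ i)) ^ 2 = Real.sin (Real.pi / (2 * m i)) ^ 2 := by
    intro i
    rw [hg0, neg_sq, Real.sin_sq]
  have hz : ∀ i, m i = 1 → G 0 (Fin.succ i) = 0 := by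
    intro i h
    rw [hg0, h]
    simp
  have hE : G' i j = (G i.succ j.succ - G 0 i.succ * G 0 j.succ) /
      (Real.sin (Real.pi / (2 * m i)) * Real.sin (Real.pi / (2 * m j))) := by
    rw [hG', hsq, hsq, ← mul_pow, Real.sqrt_sq (by positivity)]
  have ha := (isIntegral_inv_sin (hm i)).mul (isIntegral_inv_sin (hm j))
  by_cases h : m i = 1 ∨ m j = 1
  · refine ⟨_, 0, ha, isIntegral_zero, ?_⟩
    have h0 : G 0 i.succ * G 0 j.succ = 0 := by
      rcases h with h | h <;> simp [hz _ h]
    simp only [Matrix.smul_apply, smul_eq_mul, hE, h0]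
    field_simp
    ring
  · push Not at h
    have hmi : 2 ≤ m i := by have := hm i; omega
    have hmj : 2 ≤ m j := by have := hm j; omega
    have hb := (isIntegral_inv_two_sin_sq hmi).mul (isIntegral_inv_two_sin_sq hmj)
    refine ⟨_, -(1 / (2 * (Real.sin (Real.pi / (2 * m i)) * Real.sin (Real.pi / (2 * m j))))),
      ha, IsIntegral.neg (isIntegral_of_sq ?_), ?_⟩
    · refine isIntegral_congr (hb) ?_
      field_simp
    · simp only [Matrix.smul_apply, smul_eq_mul, hE, hsymm]
      field_simp
      ring
end

section
/- Let F ⊆ ℝ be a subfield which is a number field (finite-dimensional over ℚ) and totally real, i.e. every field embedding F → ℂ has image contained in ℝ. Let x ∈ F with x ≥ 0, and suppose that σ(x) ≥ 0 for every field embedding σ : F → ℝ. Then the subfield F(√x) of ℝ obtained by adjoining the real square root √x to F is a totally real number field. -/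
/-- Verification of Vinberg's condition (V1) in Proposition 3.4: if `F ⊆ ℝ` is a
totally real number field, `x ∈ F` is nonnegative and all its real embeddings take
nonnegative values at `x`, then `F(√x) ⊆ ℝ` is again a totally real number field. -/
theorem adjoin_sqrt_totally_real
    (F : Subfield ℝ) (hfin : FiniteDimensional ℚ F)
    (htr : ∀ (σ : F →+* ℂ) (y : F), (σ y).im = 0)
    (x : F) (hx : (0 : ℝ) ≤ (x : ℝ))
    (hxσ : ∀ σ : F →+* ℝ, 0 ≤ σ x) :
    FiniteDimensional ℚ (Subfield.closure ((F : Set ℝ) ∪ {Real.sqrt (x : ℝ)})) ∧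
    ∀ (σ : (Subfield.closure ((F : Set ℝ) ∪ {Real.sqrt (x : ℝ)})) →+* ℂ)
      (y : (Subfield.closure ((F : Set ℝ) ∪ {Real.sqrt (x : ℝ)}))), (σ y).im = 0 := by
  have hle : (F : Set ℝ) ⊆ Subfield.closure ((F : Set ℝ) ∪ {Real.sqrt (x : ℝ)}) :=
    Set.subset_union_left.trans Subfield.subset_closure
  have hs : Real.sqrt (x : ℝ) ∈ Subfield.closure ((F : Set ℝ) ∪ {Real.sqrt (x : ℝ)}) :=
    Subfield.subset_closure (Or.inr rfl)
  constructor
  · have hint : IsIntegral F (Real.sqrt (x : ℝ)) := by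
      refine IsIntegral.of_pow (n := 2) (by norm_num) ?_
      rw [Real.sq_sqrt hx]
      exact isIntegral_algebraMap (x := x)
    have hE : FiniteDimensional F (IntermediateField.adjoin F {Real.sqrt (x : ℝ)}) :=
      IntermediateField.adjoin.finiteDimensional hint
    have hQ : FiniteDimensional ℚ (IntermediateField.adjoin F {Real.sqrt (x : ℝ)}) :=
      FiniteDimensional.trans ℚ F _
    have heq : (IntermediateField.adjoin F {Real.sqrt (x : ℝ)}).toSubfield =
        Subfield.closure ((F : Set ℝ) ∪ {Real.sqrt (x : ℝ)}) := by
      have hr : Set.range (algebraMap F ℝ) = (F : Set ℝ) := Subtype.range_coe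
      rw [IntermediateField.adjoin_toSubfield, hr]
    have hQ' : FiniteDimensional ℚ
        (IntermediateField.adjoin F {Real.sqrt (x : ℝ)}).toSubfield := by
      let f : (IntermediateField.adjoin F {Real.sqrt (x : ℝ)}) →+*
        (IntermediateField.adjoin F {Real.sqrt (x : ℝ)}).toSubfield := RingHom.id _
      exact Module.Finite.of_surjective f.toRatAlgHom.toLinearMap (fun y => ⟨y, rfl⟩)
    rwa [heq] at hQ'
  · intro σ
    have hF : ∀ y : F, (σ ⟨y, hle y.2⟩).im = 0 := fun y =>
      htr (σ.comp (Subfield.inclusion (show F ≤ _ from hle))) y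
    let τ : F →+* ℝ :=
      { toFun := fun y => (σ ⟨y, hle y.2⟩).re
        map_one' := by
          have : σ ⟨((1 : F) : ℝ), hle (1 : F).2⟩ = 1 := map_one σ
          rw [this]; rfl
        map_zero' := by
          have : σ ⟨((0 : F) : ℝ), hle (0 : F).2⟩ = 0 := map_zero σ
          rw [this]; rfl
        map_add' := fun a b => by
          have : σ ⟨((a + b : F) : ℝ), hle (a + b).2⟩ =
            σ ⟨a, hle a.2⟩ + σ ⟨b, hle b.2⟩ := map_add σ ⟨a, hle a.2⟩ ⟨b, hle b.2⟩
          rw [this, Complex.add_re]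
        map_mul' := fun a b => by
          have : σ ⟨((a * b : F) : ℝ), hle (a * b).2⟩ =
            σ ⟨a, hle a.2⟩ * σ ⟨b, hle b.2⟩ := map_mul σ ⟨a, hle a.2⟩ ⟨b, hle b.2⟩
          rw [this, Complex.mul_re, hF a, hF b]; ring }
    have hS : (σ ⟨_, hs⟩).im = 0 := by
      have h1 : σ ⟨_, hs⟩ * σ ⟨_, hs⟩ = σ ⟨x, hle x.2⟩ := by
        rw [← map_mul]
        congr 1
        exact Subtype.ext (Real.mul_self_sqrt hx)
      have h2 : 0 ≤ (σ ⟨x, hle x.2⟩).re := hxσ τ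
      have h3 := hF x
      rw [← h1] at h2 h3
      rw [Complex.mul_re] at h2
      rw [Complex.mul_im] at h3
      generalize (σ ⟨_, hs⟩).re = a at h2 h3
      generalize (σ ⟨_, hs⟩).im = b at h2 h3 ⊢
      have h4 : a * b = 0 := by linarith
      rcases mul_eq_zero.1 h4 with h | h
      · subst h; nlinarith
      · exact h
    have key : Subfield.closure ((F : Set ℝ) ∪ {Real.sqrt (x : ℝ)}) ≤
        (RingHom.eqLocusField σ ((starRingEnd ℂ).comp σ)).map (Subfield.subtype _) := by
      rw [Subfield.closure_le]
      rintro y (hy | rfl)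
      · exact ⟨⟨y, hle hy⟩, (Complex.conj_eq_iff_im.2 (hF ⟨y, hy⟩)).symm, rfl⟩
      · exact ⟨⟨_, hs⟩, (Complex.conj_eq_iff_im.2 hS).symm, rfl⟩
    intro y
    obtain ⟨z, hz, hzy⟩ := key y.2
    have : z = y := Subtype.ext hzy
    subst this
    exact Complex.conj_eq_iff_im.1 (Eq.symm hz)
end

section
/- Let G be the symmetric 4×4 real matrix with diagonal entries 1 and off-diagonal entries g_{12} = g_{21} = −√2/2, g_{13} = g_{31} = −(2/3)√3, g_{24} = g_{42} = −√10/2, and g_{14} = g_{41} = g_{23} = g_{32} = g_{34} = g_{43} = 0. Then the matrix 2G has a cyclic product that is not an algebraic integer; in particular, the cyclic product (2g_{13})(2g_{31}) = 16/3 is not integral over ℤ. -/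
/-- The Gram matrix `G(P'₂)` of the properly quasi-arithmetic `2`-dimensional face
from Section 6 of the paper. -/
noncomputable def GP2 : Matrix (Fin 4) (Fin 4) ℝ :=
  !![1, -(Real.sqrt 2 / 2), -(2 / 3) * Real.sqrt 3, 0;
     -(Real.sqrt 2 / 2), 1, 0, -(Real.sqrt 10 / 2);
     -(2 / 3) * Real.sqrt 3, 0, 1, 0;
     0, -(Real.sqrt 10 / 2), 0, 1]

/-- Vinberg's condition (V3) fails for `G(P'₂)`: the matrix `2·G(P'₂)` has a cyclic
product, namely `(2g₁₃)(2g₃₁) = 16/3`, which is not an algebraic integer. -/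
theorem GP2_cycProd_not_integral :
    (∃ x ∈ cycProd ((2 : ℝ) • GP2), ¬ IsIntegral ℤ x) ∧
    (2 * GP2 0 2) * (2 * GP2 2 0) = 16 / 3 ∧
    ((16 : ℝ) / 3) ∈ cycProd ((2 : ℝ) • GP2) ∧
    ¬ IsIntegral ℤ ((16 : ℝ) / 3) := by
  have h3 : Real.sqrt 3 * Real.sqrt 3 = 3 := Real.mul_self_sqrt (by norm_num)
  have hprod : (2 * GP2 0 2) * (2 * GP2 2 0) = 16 / 3 := by
    have h02 : GP2 0 2 = -(2 / 3) * Real.sqrt 3 := by simp [GP2]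
    have h20 : GP2 2 0 = -(2 / 3) * Real.sqrt 3 := by simp [GP2]
    rw [h02, h20]
    linear_combination (16 / 9) * h3
  have hmem : ((16 : ℝ) / 3) ∈ cycProd ((2 : ℝ) • GP2) := by
    refine ⟨2, fun k => if k = 0 then 0 else 2, by norm_num, ?_⟩
    rw [← hprod]
    simp [Finset.prod_range_succ]
  have hnot : ¬ IsIntegral ℤ ((16 : ℝ) / 3) := by
    intro h
    have hq : IsIntegral ℤ ((16 : ℚ) / 3) := by
      have e : ((16 : ℝ) / 3) = algebraMap ℚ ℝ (16 / 3) := by simp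
      rw [e] at h
      exact (isIntegral_algebraMap_iff (algebraMap ℚ ℝ).injective).1 h
    obtain ⟨n, hn⟩ := IsIntegrallyClosed.isIntegral_iff.1 hq
    have h1 : (n : ℚ) = 16 / 3 := by simpa using hn
    have h2 : (3 * n : ℚ) = 16 := by rw [h1]; norm_num
    have h4 : 3 * n = 16 := by exact_mod_cast h2
    omega
  exact ⟨⟨_, hmem, hnot⟩, hprod, hmem, hnot⟩
end
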